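/- Let A be a finite-dimensional left Leibniz algebra over a field F of characteristic zero and let B and C be nilpotent subinvariant subalgebras of A. Then the subalgebra D generated by B and C is a nilpotent subinvariant subalgebra of A. -/

import Mathlib

open Submodule

section LeibnizDefs

variable {F : Type*} {A : Type*} [Field F] [AddCommGroup A] [Module F A]

/-- The span of all products `b*c` with `b ∈ B`, `c ∈ C`. -/
def mulSub (mul : A →ₗ[F] A →ₗ[F] A) (B C : Submodule F A) : Submodule F A :=
  Submodule.span F {z : A | ∃ b ∈ B, ∃ c ∈ C, mul b c = z}

/-- `fSub mul B C = B·C + C·B`, the function `f(B,C)`. -/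
def fSub (mul : A →ₗ[F] A →ₗ[F] A) (B C : Submodule F A) : Submodule F A :=
  mulSub mul B C ⊔ mulSub mul C B

/-- `fIter mul B C n = f^{n+1}(B,C)` (so index `0` is `f^1(B,C) = f(B,C)`). -/
def fIter (mul : A →ₗ[F] A →ₗ[F] A) (B C : Submodule F A) : ℕ → Submodule F A
  | 0 => fSub mul B C
  | n + 1 => fSub mul B (fIter mul B C n)

/-- `lcs mul B n = B^{n+1}`, the lower central series (index `0` is `B^1 = B`). -/
def lcs (mul : A →ₗ[F] A →ₗ[F] A) (B : Submodule F A) : ℕ → Submodule F A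
  | 0 => B
  | n + 1 => mulSub mul B (lcs mul B n)

/-- `ds mul B n = B^{(n+1)}`, the derived series (index `0` is `B^{(1)} = B`). -/
def ds (mul : A →ₗ[F] A →ₗ[F] A) (B : Submodule F A) : ℕ → Submodule F A
  | 0 => B
  | n + 1 => mulSub mul (ds mul B n) (ds mul B n)

/-- `B^ω = ⋂_{i ≥ 1} B^i`. -/
def omegaSub (mul : A →ₗ[F] A →ₗ[F] A) (B : Submodule F A) : Submodule F A :=
  ⨅ n, lcs mul B n

/-- `B` is a subalgebra: a subspace closed under multiplication. -/
def IsSubalg (mul : A →ₗ[F] A →ₗ[F] A) (B : Submodule F A) : Prop :=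
  ∀ x ∈ B, ∀ y ∈ B, mul x y ∈ B

/-- `I` is an ideal of the subalgebra `S`: `I ⊆ S` and `xI + Ix ⊆ I` for all `x ∈ S`. -/
def IsIdealIn (mul : A →ₗ[F] A →ₗ[F] A) (I S : Submodule F A) : Prop :=
  I ≤ S ∧ ∀ x ∈ S, ∀ y ∈ I, mul x y ∈ I ∧ mul y x ∈ I

/-- `B` is subinvariant in `S`: there is a chain of subalgebras
`B = c 0 ⊆ c 1 ⊆ ⋯ ⊆ c t = S` with each term an ideal of the next. -/
def IsSubinvariantIn (mul : A →ₗ[F] A →ₗ[F] A) (B S : Submodule F A) : Prop :=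
  ∃ (t : ℕ) (c : ℕ → Submodule F A), c 0 = B ∧ c t = S ∧
    (∀ i ≤ t, IsSubalg mul (c i)) ∧ ∀ i < t, IsIdealIn mul (c i) (c (i + 1))

/-- `B` is nilpotent: `B^m = 0` for some `m`. -/
def IsNilpotentSub (mul : A →ₗ[F] A →ₗ[F] A) (B : Submodule F A) : Prop :=
  ∃ m, lcs mul B m = ⊥

/-- `B` is solvable: `B^{(m)} = 0` for some `m`. -/
def IsSolvableSub (mul : A →ₗ[F] A →ₗ[F] A) (B : Submodule F A) : Prop :=
  ∃ m, ds mul B m = ⊥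

/-- The centralizer `Z_A(B) = {x : xb = 0 = bx for all b ∈ B}`. -/
def centralizerSet (mul : A →ₗ[F] A →ₗ[F] A) (B : Submodule F A) : Set A :=
  {x : A | ∀ b ∈ B, mul x b = 0 ∧ mul b x = 0}

/-- `R` is the radical (the maximal solvable ideal) of the subalgebra `S`. -/
def IsRadicalIn (mul : A →ₗ[F] A →ₗ[F] A) (S R : Submodule F A) : Prop :=
  IsIdealIn mul R S ∧ IsSolvableSub mul R ∧
    ∀ T, IsIdealIn mul T S → IsSolvableSub mul T → T ≤ R

/-- `N` is the nilradical (the maximal nilpotent ideal) of the subalgebra `S`. -/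
def IsNilradicalIn (mul : A →ₗ[F] A →ₗ[F] A) (S N : Submodule F A) : Prop :=
  IsIdealIn mul N S ∧ IsNilpotentSub mul N ∧
    ∀ T, IsIdealIn mul T S → IsNilpotentSub mul T → T ≤ N

/-- `H` is a Cartan subalgebra: a nilpotent self-normalizing subalgebra. -/
def IsCartan (mul : A →ₗ[F] A →ₗ[F] A) (H : Submodule F A) : Prop :=
  IsSubalg mul H ∧ IsNilpotentSub mul H ∧
    ∀ x : A, (∀ h ∈ H, mul x h ∈ H ∧ mul h x ∈ H) → x ∈ H

/-- The subalgebra generated by a set: the smallest subalgebra containing it. -/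
def subalgGen (mul : A →ₗ[F] A →ₗ[F] A) (s : Set A) : Submodule F A :=
  sInf {S : Submodule F A | IsSubalg mul S ∧ s ⊆ (S : Set A)}

end LeibnizDefs

section Assoc

variable {F E : Type*} [Field F] [Ring E] [Algebra F E]

/-- `J` is a nilpotent two-sided ideal of the subalgebra `R`. -/
structure NilId (R : Subalgebra F E) (J : Submodule F E) : Prop where
  le : ∀ x ∈ J, x ∈ R
  left : ∀ r ∈ R, ∀ x ∈ J, r * x ∈ J
  right : ∀ r ∈ R, ∀ x ∈ J, x * r ∈ J
  nil : ∃ n : ℕ, J ^ n = ⊥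

lemma deriv_iter (d : E →ₗ[F] E) (hd : ∀ x y, d (x * y) = d x * y + x * d y) (n : ℕ) (x y : E) :
    (d ^ n) (x * y) = ∑ ij ∈ Finset.HasAntidiagonal.antidiagonal n,
      n.choose ij.1 • ((d ^ ij.1) x * (d ^ ij.2) y) := by
  induction n with
  | zero => simp
  | succ n ih =>
    rw [Finset.sum_antidiagonal_choose_succ_nsmul
      (fun i j => (d ^ i) x * (d ^ j) y) n]
    rw [pow_succ', Module.End.mul_apply, ih, map_sum, ← Finset.sum_add_distrib]
    refine Finset.sum_congr rfl fun ij _ => ?_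
    rw [map_nsmul, hd, nsmul_add, pow_succ', pow_succ', Module.End.mul_apply, Module.End.mul_apply,
      add_comm]
    congr 1
    rename_i h
    rw [Finset.HasAntidiagonal.mem_antidiagonal] at h
    rw [Nat.choose_symm_of_eq_add h.symm]

lemma pow_le_of_ideal (R : Subalgebra F E) (K J : Submodule F E) (hK : ∀ x ∈ K, x ∈ R)
    (hJ : ∀ x ∈ J, x ∈ R)
    (hl : ∀ r ∈ R, ∀ x ∈ J, r * x ∈ J) (hr : ∀ r ∈ R, ∀ x ∈ J, x * r ∈ J) (n : ℕ) :
    (K ⊔ J) ^ n ≤ K ^ n ⊔ J := by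
  have hpow : ∀ n, ∀ x ∈ K ^ n, x ∈ R := by
    intro n
    induction n with
    | zero =>
      intro x hx
      rw [pow_zero] at hx
      obtain ⟨c, rfl⟩ := Submodule.mem_one.1 hx
      exact R.algebraMap_mem c
    | succ n ih =>
      intro x hx
      rw [pow_succ] at hx
      induction hx using Submodule.mul_induction_on' with
      | mem_mul_mem a ha b hb => exact R.mul_mem (ih a ha) (hK b hb)
      | add a _ b _ h1 h2 => exact R.add_mem h1 h2
  induction n with
  | zero => simp
  | succ n ih =>
    rw [pow_succ (K ⊔ J)]
    refine (mul_le_mul' ih le_rfl).trans ?_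
    rw [Submodule.mul_le]
    intro a ha b hb
    obtain ⟨a1, ha1, a2, ha2, rfl⟩ := Submodule.mem_sup.1 ha
    obtain ⟨b1, hb1, b2, hb2, rfl⟩ := Submodule.mem_sup.1 hb
    have : (a1 + a2) * (b1 + b2) = a1 * b1 + (a1 * b2 + (a2 * b1 + a2 * b2)) := by noncomm_ring
    rw [this]
    refine Submodule.add_mem_sup ?_ (J.add_mem ?_ (J.add_mem ?_ ?_))
    · rw [pow_succ]; exact Submodule.mul_mem_mul ha1 hb1
    · exact hl _ (hpow n _ ha1) _ hb2
    · exact hr _ (hK _ hb1) _ ha2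
    · exact hr _ (hJ _ hb2) _ ha2

lemma nil_of_pow_le {K J : Submodule F E} (n : ℕ) (h : K ^ n ≤ J) (hJ : ∃ n : ℕ, J ^ n = ⊥) :
    ∃ n : ℕ, K ^ n = ⊥ := by
  obtain ⟨m, hm⟩ := hJ
  refine ⟨n * m, ?_⟩
  rw [pow_mul, eq_bot_iff, ← hm]
  exact pow_le_pow_left' h m

lemma NilId.sup {R : Subalgebra F E} {K J : Submodule F E} (hK : NilId R K) (hJ : NilId R J) :
    NilId R (K ⊔ J) := by
  refine ⟨?_, ?_, ?_, ?_⟩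
  · intro x hx
    obtain ⟨a, ha, b, hb, rfl⟩ := Submodule.mem_sup.1 hx
    exact R.add_mem (hK.le _ ha) (hJ.le _ hb)
  · intro r hr x hx
    obtain ⟨a, ha, b, hb, rfl⟩ := Submodule.mem_sup.1 hx
    rw [mul_add]
    exact Submodule.add_mem_sup (hK.left _ hr _ ha) (hJ.left _ hr _ hb)
  · intro r hr x hx
    obtain ⟨a, ha, b, hb, rfl⟩ := Submodule.mem_sup.1 hx
    rw [add_mul]
    exact Submodule.add_mem_sup (hK.right _ hr _ ha) (hJ.right _ hr _ hb)
  · obtain ⟨n, hn⟩ := hK.nil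
    refine nil_of_pow_le n ?_ hJ.nil
    have := pow_le_of_ideal R K J hK.le hJ.le hJ.left hJ.right n
    rwa [hn, bot_sup_eq] at this

lemma NilId.deriv_pow [CharZero F] {R : Subalgebra F E} {J : Submodule F E} (hJ : NilId R J)
    (d : E →ₗ[F] E) (hd : ∀ x y, d (x * y) = d x * y + x * d y) (hR : ∀ x ∈ R, d x ∈ R)
    (n : ℕ) (hn : J ^ n = ⊥) : (J.map d) ^ n ≤ J := by
  have hdR : ∀ k, ∀ x ∈ R, (d ^ k) x ∈ R := by
    intro k
    induction k with
    | zero => intro x hx; simpa using hx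
    | succ k ih => intro x hx; rw [pow_succ, Module.End.mul_apply]; exact ih _ (hR _ hx)
  have hpl : ∀ n, ∀ r ∈ R, ∀ x ∈ J ^ (n+1), r * x ∈ J ^ (n+1) := by
    intro n r hr x hx
    rw [pow_succ'] at hx ⊢
    induction hx using Submodule.mul_induction_on' with
    | mem_mul_mem a ha b hb =>
      rw [← mul_assoc]; exact Submodule.mul_mem_mul (hJ.left _ hr _ ha) hb
    | add a _ b _ h1 h2 => rw [mul_add]; exact Submodule.add_mem _ h1 h2
  have hJJ : ∀ n, J ^ (n+1) ≤ J := by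
    intro n
    induction n with
    | zero => simp
    | succ n ih =>
      rw [pow_succ, Submodule.mul_le]
      intro a ha b hb
      exact hJ.left _ (hJ.le _ (ih ha)) _ hb
  have hpR : ∀ n, ∀ x ∈ J ^ n, x ∈ R := by
    intro n x hx
    cases n with
    | zero =>
      rw [pow_zero] at hx
      obtain ⟨c, rfl⟩ := Submodule.mem_one.1 hx
      exact R.algebraMap_mem c
    | succ n => exact hJ.le _ (hJJ n hx)
  have h1 : ∀ n, ∀ x ∈ J ^ (n+2), d x ∈ J ^ (n+1) := by
    intro n
    induction n with
    | zero =>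
      intro x hx
      rw [zero_add, pow_one]
      rw [zero_add, pow_two] at hx
      induction hx using Submodule.mul_induction_on' with
      | mem_mul_mem a ha b hb =>
        rw [hd]
        exact J.add_mem (hJ.left _ (hR _ (hJ.le _ ha)) _ hb) (hJ.right _ (hR _ (hJ.le _ hb)) _ ha)
      | add a _ b _ h1 h2 => rw [map_add]; exact J.add_mem h1 h2
    | succ n ih =>
      intro x hx
      rw [show n + 1 + 2 = (n + 2) + 1 from rfl, pow_succ'] at hx
      induction hx using Submodule.mul_induction_on' with
      | mem_mul_mem a ha b hb =>
        rw [hd]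
        refine Submodule.add_mem _ (hpl (n+1) _ (hR _ (hJ.le _ ha)) _ hb) ?_
        rw [pow_succ']
        exact Submodule.mul_mem_mul ha (ih _ hb)
      | add a _ b _ h1 h2 => rw [map_add]; exact Submodule.add_mem _ h1 h2
  have h2 : ∀ k n, ∀ x ∈ J ^ (n+1+k), (d ^ k) x ∈ J ^ (n+1) := by
    intro k
    induction k with
    | zero => intro n x hx; simpa using hx
    | succ k ih =>
      intro n x hx
      rw [pow_succ d, Module.End.mul_apply]
      refine ih n _ ?_
      have := h1 (n + k) x (by convert hx using 2; ring)
      convert this using 2; ring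
  have h3 : ∀ n k, k < n → ∀ x ∈ J ^ n, (d ^ k) x ∈ J := by
    intro n k hk x hx
    obtain ⟨m, rfl⟩ := Nat.exists_eq_add_of_lt hk
    exact hJJ m (h2 k m x (by convert hx using 2; ring))
  have key : ∀ n, ∀ w ∈ (J.map d) ^ n, ∃ p ∈ J ^ n, (d ^ n) p - (n.factorial : F) • w ∈ J := by
    intro n
    induction n with
    | zero => intro w hw; exact ⟨w, by simpa using hw, by simp⟩
    | succ n ih =>
      intro w hw
      rw [pow_succ'] at hw
      induction hw using Submodule.mul_induction_on' with
      | mem_mul_mem a ha b hb =>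
        obtain ⟨x, hx, rfl⟩ := ha
        obtain ⟨p, hp, hpb⟩ := ih b hb
        refine ⟨x * p, by rw [pow_succ']; exact Submodule.mul_mem_mul hx hp, ?_⟩
        have e : (d ^ (n+1)) (x * p) - ((n+1).factorial : F) • (d x * b)
            = x * (d ^ (n+1)) p + ((n+1 : ℕ) : F) • (d x * ((d ^ n) p - (n.factorial : F) • b))
              + ∑ i ∈ Finset.range n, (n+1).choose (i+2) • ((d ^ (i+2)) x * (d ^ (n+1-(i+2))) p) := by
          rw [deriv_iter d hd, Finset.Nat.sum_antidiagonal_eq_sum_range_succ_mk,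
            Finset.sum_range_succ', Finset.sum_range_succ']
          simp only [Nat.factorial_succ, mul_sub, smul_sub, mul_smul_comm, smul_smul]
          have hc : ((n : F) + 1) • (d x * (d ^ n) p) = ((n : E) + 1) * (d x * (d ^ n) p) := by
            rw [Algebra.smul_def]; simp
          simp
          rw [hc]
          simp only [add_assoc, Nat.reduceAdd]
          abel
        rw [e]
        refine J.add_mem (J.add_mem ?_ ?_) ?_
        · exact hJ.right _ (hdR _ _ (hpR _ _ hp)) _ hx
        · exact J.smul_mem _ (hJ.left _ (hR _ (hJ.le _ hx)) _ hpb)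
        · refine J.sum_mem fun i hi => J.nsmul_mem ?_ _
          rw [Finset.mem_range] at hi
          exact hJ.left _ (hdR _ _ (hJ.le _ hx)) _ (h3 n _ (by omega) _ hp)
      | add a _ b _ h1 h2 =>
        obtain ⟨p, hp, hp'⟩ := h1
        obtain ⟨q, hq, hq'⟩ := h2
        refine ⟨p + q, Submodule.add_mem _ hp hq, ?_⟩
        have := J.add_mem hp' hq'
        rw [map_add, smul_add]
        convert this using 1
        abel
  intro w hw
  obtain ⟨p, hp, h⟩ := key n w hw
  rw [hn, Submodule.mem_bot] at hp
  rw [hp, map_zero, zero_sub, J.neg_mem_iff] at h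
  exact (J.smul_mem_iff (Nat.cast_ne_zero.2 n.factorial_ne_zero)).1 h

lemma NilId.deriv [CharZero F] {R : Subalgebra F E} {J : Submodule F E} (hJ : NilId R J)
    (d : E →ₗ[F] E) (hd : ∀ x y, d (x * y) = d x * y + x * d y) (hR : ∀ x ∈ R, d x ∈ R) :
    NilId R (J.map d ⊔ J) := by
  have hle : ∀ x ∈ J.map d, x ∈ R := by
    rintro _ ⟨x, hx, rfl⟩
    exact hR _ (hJ.le _ hx)
  refine ⟨?_, ?_, ?_, ?_⟩
  · intro x hx
    obtain ⟨a, ha, b, hb, rfl⟩ := Submodule.mem_sup.1 hx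
    exact R.add_mem (hle _ ha) (hJ.le _ hb)
  · intro r hr x hx
    obtain ⟨_, ⟨a, ha, rfl⟩, b, hb, rfl⟩ := Submodule.mem_sup.1 hx
    have : r * (d a + b) = d (r * a) + (r * b - d r * a) := by rw [hd]; noncomm_ring
    rw [this]
    exact Submodule.add_mem_sup ⟨_, hJ.left _ hr _ ha, rfl⟩
      (J.sub_mem (hJ.left _ hr _ hb) (hJ.left _ (hR _ hr) _ ha))
  · intro r hr x hx
    obtain ⟨_, ⟨a, ha, rfl⟩, b, hb, rfl⟩ := Submodule.mem_sup.1 hx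
    have : (d a + b) * r = d (a * r) + (b * r - a * d r) := by rw [hd]; noncomm_ring
    rw [this]
    exact Submodule.add_mem_sup ⟨_, hJ.right _ hr _ ha, rfl⟩
      (J.sub_mem (hJ.right _ hr _ hb) (hJ.right _ (hR _ hr) _ ha))
  · obtain ⟨n, hn⟩ := hJ.nil
    refine nil_of_pow_le n ?_ hJ.nil
    have := pow_le_of_ideal R _ J hle hJ.le hJ.left hJ.right n
    exact this.trans (sup_le (hJ.deriv_pow d hd hR n hn) le_rfl)

/-- inner derivation -/
def adE (a : E) : E →ₗ[F] E := LinearMap.mulLeft F a - LinearMap.mulRight F a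

lemma adE_apply (a x : E) : adE (F := F) a x = a * x - x * a := rfl

lemma adE_mul (a x y : E) : adE (F := F) a (x * y) = adE (F := F) a x * y + x * adE (F := F) a y := by
  simp only [adE_apply]; noncomm_ring

lemma NilId.step [CharZero F] [FiniteDimensional F E] (S S' : Set E)
    (hS : ∀ a ∈ S', ∀ s ∈ S, a * s - s * a ∈ S) (hSS : S ⊆ S')
    {J : Submodule F E} (hJ : NilId (Algebra.adjoin F S) J) :
    ∃ J', J ≤ J' ∧ NilId (Algebra.adjoin F S') J' := by
  set R := Algebra.adjoin F S with hRdef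
  set U := Algebra.adjoin F S' with hUdef
  have hRd : ∀ a ∈ S', ∀ x ∈ R, adE (F := F) a x ∈ R := by
    intro a ha x hx
    induction hx using Algebra.adjoin_induction with
    | mem x hx => exact Algebra.subset_adjoin (hS a ha x hx)
    | algebraMap r =>
      rw [adE_apply, Algebra.commutes, sub_self]; exact R.zero_mem
    | add x y _ _ h1 h2 => rw [map_add]; exact R.add_mem h1 h2
    | mul x y hx hy h1 h2 =>
      rw [adE_mul]; exact R.add_mem (R.mul_mem h1 hy) (R.mul_mem hx h2)
  obtain ⟨M, ⟨hJM, hM⟩, hmax⟩ := WellFounded.has_min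
    (wellFounded_gt (α := Submodule F E)) {M | J ≤ M ∧ NilId R M} ⟨J, le_rfl, hJ⟩
  have hMd : ∀ a ∈ S', ∀ x ∈ M, adE (F := F) a x ∈ M := by
    intro a ha x hx
    have h1 := hM.deriv (adE a) (adE_mul a) (hRd a ha)
    have h2 := hmax _ ⟨hJM.trans le_sup_right, h1⟩
    have h3 : M = M.map (adE a) ⊔ M := by
      by_contra hne
      exact h2 (lt_of_le_of_ne le_sup_right hne)
    rw [h3]
    exact Submodule.mem_sup_left ⟨x, hx, rfl⟩
  have hRU : ∀ x ∈ R, x ∈ U := fun x hx => Algebra.adjoin_mono hSS hx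
  set P := M * Subalgebra.toSubmodule U with hP
  have hPr : ∀ r ∈ U, ∀ x ∈ P, x * r ∈ P := by
    intro r hr x hx
    induction hx using Submodule.mul_induction_on' with
    | mem_mul_mem a ha b hb =>
      rw [mul_assoc]; exact Submodule.mul_mem_mul ha (U.mul_mem hb hr)
    | add a _ b _ h1 h2 => rw [add_mul]; exact Submodule.add_mem _ h1 h2
  have hPl : ∀ r ∈ U, ∀ x ∈ P, r * x ∈ P := by
    intro r hr
    induction hr using Algebra.adjoin_induction with
    | mem s hs =>
      intro x hx
      induction hx using Submodule.mul_induction_on' with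
      | mem_mul_mem a ha b hb =>
        have : s * (a * b) = (adE (F := F) s a) * b + a * (s * b) := by
          rw [adE_apply]; noncomm_ring
        rw [this]
        exact P.add_mem (Submodule.mul_mem_mul (hMd s hs a ha) hb)
          (Submodule.mul_mem_mul ha (U.mul_mem (Algebra.subset_adjoin hs) hb))
      | add a _ b _ h1 h2 => rw [mul_add]; exact Submodule.add_mem _ h1 h2
    | algebraMap r => intro x hx; rw [← Algebra.smul_def]; exact P.smul_mem _ hx
    | add x y _ _ h1 h2 => intro z hz; rw [add_mul]; exact P.add_mem (h1 z hz) (h2 z hz)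
    | mul x y _ _ h1 h2 => intro z hz; rw [mul_assoc]; exact h1 _ (h2 z hz)
  have hMP : M ≤ P := fun x hx => by
    have := Submodule.mul_mem_mul hx (show (1:E) ∈ Subalgebra.toSubmodule U from U.one_mem)
    rwa [mul_one] at this
  refine ⟨P, hJM.trans hMP, ?_, hPl, hPr, ?_⟩
  · intro x hx
    induction hx using Submodule.mul_induction_on' with
    | mem_mul_mem a ha b hb => exact U.mul_mem (hRU _ (hM.le _ ha)) hb
    | add a _ b _ h1 h2 => exact U.add_mem h1 h2
  · have hUM : Subalgebra.toSubmodule U * M ≤ P := by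
      rw [Submodule.mul_le]
      intro r hr x hx
      exact hPl r hr x (hMP hx)
    have hUU : Subalgebra.toSubmodule U * Subalgebra.toSubmodule U ≤ Subalgebra.toSubmodule U := by
      rw [Submodule.mul_le]
      intro r hr x hx
      exact U.mul_mem hr hx
    have : ∀ n, P ^ n ≤ M ^ n * Subalgebra.toSubmodule U := by
      intro n
      induction n with
      | zero =>
        rw [pow_zero, pow_zero, one_mul, Submodule.one_le]; exact U.one_mem
      | succ n ih =>
        calc P ^ (n+1) = P ^ n * P := pow_succ _ _
          _ ≤ (M ^ n * Subalgebra.toSubmodule U) * P := mul_le_mul' ih le_rfl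
          _ = M ^ n * ((Subalgebra.toSubmodule U * M) * Subalgebra.toSubmodule U) := by
            rw [hP]; simp only [mul_assoc]
          _ ≤ M ^ n * (P * Subalgebra.toSubmodule U) :=
            mul_le_mul' le_rfl (mul_le_mul' hUM le_rfl)
          _ = M ^ (n+1) * (Subalgebra.toSubmodule U * Subalgebra.toSubmodule U) := by
            rw [hP, pow_succ]; simp only [mul_assoc]
          _ ≤ _ := mul_le_mul' le_rfl hUU
    obtain ⟨n, hn⟩ := hM.nil
    refine ⟨n, eq_bot_iff.2 ((this n).trans ?_)⟩
    rw [hn, Submodule.bot_mul]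

end Assoc

section Leib

variable {F : Type*} {A : Type*} [Field F] [AddCommGroup A] [Module F A]

lemma mulSub_le {mul : A →ₗ[F] A →ₗ[F] A} {B C D : Submodule F A} :
    mulSub mul B C ≤ D ↔ ∀ b ∈ B, ∀ c ∈ C, mul b c ∈ D := by
  rw [mulSub, Submodule.span_le]
  constructor
  · intro h b hb c hc
    exact h ⟨b, hb, c, hc, rfl⟩
  · rintro h _ ⟨b, hb, c, hc, rfl⟩
    exact h b hb c hc

lemma mem_mulSub {mul : A →ₗ[F] A →ₗ[F] A} {B C : Submodule F A} {b c : A} (hb : b ∈ B)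
    (hc : c ∈ C) : mul b c ∈ mulSub mul B C := Submodule.subset_span ⟨b, hb, c, hc, rfl⟩

/-- iterated left action of `B` on the whole algebra -/
def actSeq (mul : A →ₗ[F] A →ₗ[F] A) (B : Submodule F A) : ℕ → Submodule F A
  | 0 => ⊤
  | n + 1 => mulSub mul B (actSeq mul B n)

lemma actSeq_anti (mul : A →ₗ[F] A →ₗ[F] A) (B : Submodule F A) (n : ℕ) :
    actSeq mul B (n+1) ≤ actSeq mul B n := by
  induction n with
  | zero => exact le_top
  | succ n ih =>
    rw [actSeq, mulSub_le]
    intro b hb c hc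
    exact mem_mulSub hb (ih hc)

lemma actSeq_bot (mul : A →ₗ[F] A →ₗ[F] A) (B : Submodule F A)
    (hB : IsSubinvariantIn mul B ⊤) (hBnil : IsNilpotentSub mul B) :
    ∃ n, actSeq mul B n = ⊥ := by
  obtain ⟨t, c, h0, ht, hs, hi⟩ := hB
  obtain ⟨m, hm⟩ := hBnil
  have hBc : ∀ i ≤ t, B ≤ c i := by
    intro i
    induction i with
    | zero => intro _; exact h0.ge
    | succ i ih => intro h; exact (ih (by omega)).trans (hi i (by omega)).1
  have h1 : ∀ i ≤ t, actSeq mul B i ≤ c (t - i) := by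
    intro i
    induction i with
    | zero => intro _; rw [Nat.sub_zero, ht]; exact le_top
    | succ i ih =>
      intro h
      rw [actSeq, mulSub_le]
      intro b hb x hx
      have hx' := ih (by omega) hx
      have h2 := (hi (t - (i+1)) (by omega)).2 x
        (by rw [show t - (i+1) + 1 = t - i by omega]; exact hx') b (hBc _ (by omega) hb)
      exact h2.2
  have h2 : ∀ k, actSeq mul B (t + k) ≤ lcs mul B k := by
    intro k
    induction k with
    | zero => have := h1 t le_rfl; rwa [Nat.sub_self, h0] at this
    | succ k ih =>
      rw [← add_assoc, actSeq, lcs, mulSub_le]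
      intro b hb x hx
      exact mem_mulSub hb (ih hx)
  exact ⟨t + m, eq_bot_iff.2 ((h2 m).trans hm.le)⟩

lemma base_nilId (mul : A →ₗ[F] A →ₗ[F] A) (B : Submodule F A)
    (h : ∃ n, actSeq mul B n = ⊥) :
    ∃ J : Submodule F (Module.End F A), (∀ b ∈ B, (mul b : Module.End F A) ∈ J) ∧
      NilId (Algebra.adjoin F ((fun x => (mul x : Module.End F A)) '' (B : Set A))) J := by
  set R := Algebra.adjoin F ((fun x => (mul x : Module.End F A)) '' (B : Set A)) with hR
  let V := actSeq mul B
  have hRV : ∀ r ∈ R, ∀ i, ∀ v ∈ V i, r v ∈ V i := by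
    intro r hr
    induction hr using Algebra.adjoin_induction with
    | mem s hs =>
      obtain ⟨b, hb, rfl⟩ := hs
      intro i v hv
      exact actSeq_anti mul B i (mem_mulSub hb hv)
    | algebraMap r =>
      intro i v hv
      rw [Module.algebraMap_end_apply]; exact (V i).smul_mem _ hv
    | add x y _ _ h1 h2 => intro i v hv; exact (V i).add_mem (h1 i v hv) (h2 i v hv)
    | mul x y _ _ h1 h2 => intro i v hv; exact h1 i _ (h2 i v hv)
  let J : Submodule F (Module.End F A) :=
    { carrier := {f | f ∈ R ∧ ∀ i, ∀ v ∈ V i, f v ∈ V (i+1)}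
      add_mem' := fun {f g} hf hg => ⟨R.add_mem hf.1 hg.1, fun i v hv =>
        (V (i+1)).add_mem (hf.2 i v hv) (hg.2 i v hv)⟩
      zero_mem' := ⟨R.zero_mem, fun i v _ => (V (i+1)).zero_mem⟩
      smul_mem' := fun c f hf => ⟨R.smul_mem hf.1 c, fun i v hv =>
        (V (i+1)).smul_mem c (hf.2 i v hv)⟩ }
  refine ⟨J, ?_, ?_, ?_, ?_, ?_⟩
  · intro b hb
    exact ⟨Algebra.subset_adjoin ⟨b, hb, rfl⟩, fun i v hv => mem_mulSub hb hv⟩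
  · intro x hx; exact hx.1
  · intro r hr x hx
    exact ⟨R.mul_mem hr hx.1, fun i v hv => hRV r hr _ _ (hx.2 i v hv)⟩
  · intro r hr x hx
    exact ⟨R.mul_mem hx.1 hr, fun i v hv => hx.2 i _ (hRV r hr _ _ hv)⟩
  · obtain ⟨n, hn⟩ := h
    have key : ∀ k, ∀ f ∈ J ^ k, ∀ v, f v ∈ V k := by
      intro k
      induction k with
      | zero => intro f _ v; exact Submodule.mem_top
      | succ k ih =>
        intro f hf v
        rw [pow_succ'] at hf
        induction hf using Submodule.mul_induction_on' with
        | mem_mul_mem a ha b hb => exact ha.2 k _ (ih b hb v)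
        | add a _ b _ h1 h2 => exact Submodule.add_mem _ h1 h2
    refine ⟨n, eq_bot_iff.2 fun f hf => ?_⟩
    rw [Submodule.mem_bot]
    ext v
    have := key n f hf v
    rw [show V n = ⊥ from hn, Submodule.mem_bot] at this
    simpa using this

lemma subinv_nilId [CharZero F] [FiniteDimensional F A] (mul : A →ₗ[F] A →ₗ[F] A)
    (hleib : ∀ x y z : A, mul x (mul y z) = mul (mul x y) z + mul y (mul x z))
    (B : Submodule F A)
    (hB : IsSubinvariantIn mul B ⊤) (hBnil : IsNilpotentSub mul B) :
    ∃ J : Submodule F (Module.End F A), (∀ b ∈ B, (mul b : Module.End F A) ∈ J) ∧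
      NilId (Algebra.adjoin F ((fun x => (mul x : Module.End F A)) ''
        ((⊤ : Submodule F A) : Set A))) J := by
  have hbase := base_nilId mul B (actSeq_bot mul B hB hBnil)
  obtain ⟨t, c, h0, ht, hs, hi⟩ := hB
  have key : ∀ i ≤ t, ∃ J : Submodule F (Module.End F A),
      (∀ b ∈ B, (mul b : Module.End F A) ∈ J) ∧
      NilId (Algebra.adjoin F ((fun x => (mul x : Module.End F A)) '' (c i : Set A))) J := by
    intro i
    induction i with
    | zero => intro _; rw [h0]; exact hbase
    | succ i ih =>
      intro h
      obtain ⟨J, hJ1, hJ2⟩ := ih (by omega)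
      have hid := hi i (by omega)
      obtain ⟨J', hle, hJ'⟩ := NilId.step _
        ((fun x => (mul x : Module.End F A)) '' (c (i+1) : Set A)) (by
          rintro _ ⟨a, ha, rfl⟩ _ ⟨s, hs, rfl⟩
          refine ⟨mul a s, (hid.2 a ha s hs).1, ?_⟩
          ext z
          simp [hleib a s z]) (Set.image_mono hid.1) hJ2
      exact ⟨J', fun b hb => hle (hJ1 b hb), hJ'⟩
  rw [← ht]
  exact key t le_rfl

lemma lcs_anti (mul : A →ₗ[F] A →ₗ[F] A) (N : Submodule F A) (hN : IsSubalg mul N) (n : ℕ) :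
    lcs mul N (n+1) ≤ lcs mul N n := by
  induction n with
  | zero => rw [lcs, lcs, mulSub_le]; exact hN
  | succ n ih =>
    rw [lcs, mulSub_le]
    intro b hb c hc
    exact mem_mulSub hb (ih hc)

lemma lcs_le (mul : A →ₗ[F] A →ₗ[F] A) (N : Submodule F A) (hN : IsSubalg mul N) (n : ℕ) :
    lcs mul N n ≤ N := by
  induction n with
  | zero => exact le_rfl
  | succ n ih => exact (lcs_anti mul N hN n).trans ih

lemma lcs_mono (mul : A →ₗ[F] A →ₗ[F] A) {D N : Submodule F A} (h : D ≤ N) (n : ℕ) :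
    lcs mul D n ≤ lcs mul N n := by
  induction n with
  | zero => exact h
  | succ n ih =>
    rw [lcs, mulSub_le]
    intro b hb c hc
    exact mem_mulSub (h hb) (ih hc)

lemma lcs_mul (mul : A →ₗ[F] A →ₗ[F] A)
    (hleib : ∀ x y z : A, mul x (mul y z) = mul (mul x y) z + mul y (mul x z))
    (N : Submodule F A) (i : ℕ) :
    ∀ j, ∀ p ∈ lcs mul N i, ∀ q ∈ lcs mul N j, mul p q ∈ lcs mul N (i + j + 1) := by
  induction i with
  | zero =>
    intro j p hp q hq
    rw [zero_add]
    exact mem_mulSub hp hq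
  | succ i ih =>
    intro j p hp q hq
    have : lcs mul N (i+1) ≤ (lcs mul N (i + 1 + j + 1)).comap (mul.flip q) := by
      rw [lcs, mulSub_le]
      intro a ha b hb
      rw [Submodule.mem_comap, LinearMap.flip_apply]
      have e : mul (mul a b) q = mul a (mul b q) - mul b (mul a q) := by rw [hleib a b q]; abel
      rw [e]
      refine Submodule.sub_mem _ ?_ ?_
      · rw [show i + 1 + j + 1 = (i + j + 1) + 1 by ring]
        exact mem_mulSub ha (ih j b hb q hq)
      · rw [show i + 1 + j + 1 = i + (j + 1) + 1 by ring]
        exact ih (j+1) b hb _ (mem_mulSub ha hq)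
    exact this hp

lemma subinv_of_nilpotent (mul : A →ₗ[F] A →ₗ[F] A)
    (hleib : ∀ x y z : A, mul x (mul y z) = mul (mul x y) z + mul y (mul x z))
    (N D : Submodule F A) (hN : IsIdealIn mul N ⊤) (hnil : IsNilpotentSub mul N)
    (hD : IsSubalg mul D) (hDN : D ≤ N) : IsSubinvariantIn mul D ⊤ := by
  obtain ⟨m, hm⟩ := hnil
  have hNs : IsSubalg mul N := fun x _ y hy => (hN.2 x Submodule.mem_top y hy).1
  have hprod : ∀ j, ∀ x ∈ D ⊔ lcs mul N j, ∀ y ∈ D ⊔ lcs mul N (j+1),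
      mul x y ∈ D ⊔ lcs mul N (j+1) ∧ mul y x ∈ D ⊔ lcs mul N (j+1) := by
    intro j x hx y hy
    obtain ⟨a, ha, b, hb, rfl⟩ := Submodule.mem_sup.1 hx
    obtain ⟨a', ha', b', hb', rfl⟩ := Submodule.mem_sup.1 hy
    have hb'N : b' ∈ N := lcs_le mul N hNs _ hb'
    have hb'j := lcs_anti mul N hNs _ hb'
    have r : ∀ u ∈ N, ∀ v ∈ lcs mul N j, mul u v ∈ lcs mul N (j+1) :=
      fun u hu v hv => mem_mulSub hu hv
    have l : ∀ u ∈ N, ∀ v ∈ lcs mul N j, mul v u ∈ lcs mul N (j+1) :=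
      fun u hu v hv => lcs_mul mul hleib N j 0 v hv u hu
    simp only [map_add, LinearMap.add_apply]
    constructor
    · have : mul a a' + mul b a' + (mul a b' + mul b b') =
          mul a a' + (mul b a' + (mul a b' + mul b b')) := by abel
      rw [this]
      exact Submodule.add_mem_sup (hD _ ha _ ha') (Submodule.add_mem _ (l _ (hDN ha') _ hb)
        (Submodule.add_mem _ (r _ (hDN ha) _ hb'j) (l _ hb'N _ hb)))
    · have : mul a' a + mul b' a + (mul a' b + mul b' b) =
          mul a' a + (mul b' a + (mul a' b + mul b' b)) := by abel
      rw [this]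
      exact Submodule.add_mem_sup (hD _ ha' _ ha) (Submodule.add_mem _ (l _ (hDN ha) _ hb'j)
        (Submodule.add_mem _ (r _ (hDN ha') _ hb) (r _ hb'N _ hb)))
  have hmono : ∀ j, D ⊔ lcs mul N (j+1) ≤ D ⊔ lcs mul N j :=
    fun j => sup_le_sup_left (lcs_anti mul N hNs j) D
  have hsub : ∀ j, IsSubalg mul (D ⊔ lcs mul N j) := by
    intro j
    cases j with
    | zero => rw [lcs, sup_eq_right.2 hDN]; exact hNs
    | succ j => intro x hx y hy; exact (hprod j x (hmono j hx) y hy).1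
  refine ⟨m + 1, fun i => if i ≤ m then D ⊔ lcs mul N (m - i) else ⊤, ?_, ?_, ?_, ?_⟩
  · simp [hm]
  · simp
  · intro i _
    dsimp only
    split_ifs
    · exact hsub _
    · intro _ _ _ _; exact Submodule.mem_top
  · intro i hi
    dsimp only
    rw [if_pos (by omega)]
    split_ifs with h
    · have e : m - i = (m - (i+1)) + 1 := by omega
      rw [e]
      exact ⟨hmono _, hprod _⟩
    · have e : m - i = 0 := by omega
      rw [e, lcs, sup_eq_right.2 hDN]
      exact hN

end Leib

/-- over characteristic zero, the subalgebra generated by two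
nilpotent subinvariant subalgebras is a nilpotent subinvariant subalgebra. -/
theorem stmt_16 {F A : Type*} [Field F] [CharZero F]
    [AddCommGroup A] [Module F A] [FiniteDimensional F A]
    (mul : A →ₗ[F] A →ₗ[F] A)
    (hleib : ∀ x y z : A, mul x (mul y z) = mul (mul x y) z + mul y (mul x z))
    (B C : Submodule F A)
    (hB : IsSubinvariantIn mul B ⊤) (hBnil : IsNilpotentSub mul B)
    (hC : IsSubinvariantIn mul C ⊤) (hCnil : IsNilpotentSub mul C) :
    IsSubalg mul (subalgGen mul ((B : Set A) ∪ (C : Set A))) ∧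
    IsNilpotentSub mul (subalgGen mul ((B : Set A) ∪ (C : Set A))) ∧
    IsSubinvariantIn mul (subalgGen mul ((B : Set A) ∪ (C : Set A))) ⊤ := by
  obtain ⟨J1, hB1, hJ1⟩ := subinv_nilId mul hleib B hB hBnil
  obtain ⟨J2, hC2, hJ2⟩ := subinv_nilId mul hleib C hC hCnil
  have hJ := hJ1.sup hJ2
  set J := J1 ⊔ J2 with hJdef
  let N : Submodule F A := J.comap (mul : A →ₗ[F] Module.End F A)
  have hL : ∀ x : A, (mul x : Module.End F A) ∈ Algebra.adjoin F
      ((fun x => (mul x : Module.End F A)) '' ((⊤ : Submodule F A) : Set A)) :=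
    fun x => Algebra.subset_adjoin ⟨x, Submodule.mem_top, rfl⟩
  have hcomm : ∀ x y : A, (mul (mul x y) : Module.End F A) =
      (mul x : Module.End F A) * (mul y : Module.End F A) -
        (mul y : Module.End F A) * (mul x : Module.End F A) := by
    intro x y
    ext z
    simp [hleib x y z]
  have hNid : IsIdealIn mul N ⊤ := by
    refine ⟨le_top, fun x _ y hy => ⟨?_, ?_⟩⟩
    · change (mul (mul x y) : Module.End F A) ∈ J
      rw [hcomm]
      exact J.sub_mem (hJ.left _ (hL x) _ hy) (hJ.right _ (hL x) _ hy)
    · change (mul (mul y x) : Module.End F A) ∈ J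
      rw [hcomm]
      exact J.sub_mem (hJ.right _ (hL x) _ hy) (hJ.left _ (hL x) _ hy)
  have hNnil : IsNilpotentSub mul N := by
    obtain ⟨n, hn⟩ := hJ.nil
    have key : ∀ k, lcs mul N k ≤
        Submodule.span F {z : A | ∃ f ∈ J ^ k, ∃ v : A, f v = z} := by
      intro k
      induction k with
      | zero =>
        intro x _
        exact Submodule.subset_span ⟨1, by rw [pow_zero]; exact Submodule.one_le.1 le_rfl, x, rfl⟩
      | succ k ih =>
        rw [lcs, mulSub_le]
        intro b hb c hc
        have hc' := ih hc
        clear hc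
        induction hc' using Submodule.span_induction with
        | mem z hz =>
          obtain ⟨f, hf, v, rfl⟩ := hz
          refine Submodule.subset_span ⟨(mul b : Module.End F A) * f, ?_, v, rfl⟩
          rw [pow_succ']
          exact Submodule.mul_mem_mul hb hf
        | zero => rw [map_zero]; exact Submodule.zero_mem _
        | add x y _ _ h1 h2 => rw [map_add]; exact Submodule.add_mem _ h1 h2
        | smul a x _ h => rw [map_smul]; exact Submodule.smul_mem _ _ h
    refine ⟨n, eq_bot_iff.2 ((key n).trans ?_)⟩
    rw [Submodule.span_le]
    rintro _ ⟨f, hf, v, rfl⟩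
    rw [hn, Submodule.mem_bot] at hf
    simp [hf]
  have hDs : IsSubalg mul (subalgGen mul ((B : Set A) ∪ (C : Set A))) := by
    intro x hx y hy
    rw [subalgGen, Submodule.mem_sInf] at *
    intro S hS
    exact hS.1 _ (hx S hS) _ (hy S hS)
  have hDN : subalgGen mul ((B : Set A) ∪ (C : Set A)) ≤ N := by
    refine sInf_le ⟨fun x _ y hy => (hNid.2 x Submodule.mem_top y hy).1, ?_⟩
    rintro x (hx | hx)
    · exact Submodule.mem_sup_left (hB1 x hx)
    · exact Submodule.mem_sup_right (hC2 x hx)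
  refine ⟨hDs, ?_, subinv_of_nilpotent mul hleib N _ hNid hNnil hDs hDN⟩
  obtain ⟨m, hm⟩ := hNnil
  exact ⟨m, eq_bot_iff.2 ((lcs_mono mul hDN m).trans hm.le)⟩
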